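/- Proposition 2.3: Let 𝕄 be an infinite subset of ℕ, let Ω ⊆ ℂⁿ be an open convex set, let ζ ∈ Ω be fixed, let K ⊆ ℂⁿ be a compact convex set disjoint from Ω, and let (N_j)_{j≥0} be any enumeration (bijection ℕ → ℕⁿ) of ℕⁿ. Then there exists a holomorphic function f on Ω such that: for every holomorphic polynomial P on ℂⁿ there exists a sequence (λ_N)_{N≥1} with λ_N ∈ 𝕄 for all N, such that S_{λ_N}(f,ζ) → P uniformly on K as N → ∞, and S_{λ_N}(f,ζ) → f uniformly on each compact subset of Ω as N → ∞. Moreover, the set of all such functions f is a dense G_δ subset of O(Ω), where O(Ω) is the space of holomorphic functions on Ω with the topology of uniform convergence on compact subsets of Ω. -/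

import Mathlib

open Set Filter Topology

noncomputable section

/-- Evaluation of a multivariate polynomial as a function on `ℂⁿ = Fin n → ℂ`. -/
def mvEval {n : ℕ} (p : MvPolynomial (Fin n) ℂ) : (Fin n → ℂ) → ℂ :=
  fun z => MvPolynomial.eval z p

/-- The polynomially convex hull of a set in `ℂⁿ`. -/
def polyHull {n : ℕ} (K : Set (Fin n → ℂ)) : Set (Fin n → ℂ) :=
  {z | ∀ p : MvPolynomial (Fin n) ℂ, ‖mvEval p z‖ ≤ sSup ((fun w => ‖mvEval p w‖) '' K)}

/-- A set in `ℂⁿ` is polynomially convex if it equals its polynomially convex hull. -/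
def IsPolyConvex {n : ℕ} (K : Set (Fin n → ℂ)) : Prop := polyHull K = K

/-- The polynomially convex hull of a subset of `ℂ`. -/
def polyHull1 (F : Set ℂ) : Set ℂ :=
  {z | ∀ p : Polynomial ℂ, ‖p.eval z‖ ≤ sSup ((fun w => ‖p.eval w‖) '' F)}

/-- A subset of `ℂ` is polynomially convex if it equals its polynomially convex hull. -/
def IsPolyConvex1 (F : Set ℂ) : Prop := polyHull1 F = F

/-- Partial derivative in the `i`-th coordinate direction. -/
def pd {n : ℕ} (i : Fin n) (f : (Fin n → ℂ) → ℂ) : (Fin n → ℂ) → ℂ :=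
  fun z => fderiv ℂ f z (Pi.single i 1)

/-- Iterated partial derivative `D^ℓ = ∂^{ℓ₁+⋯+ℓₙ}/∂z₁^{ℓ₁}⋯∂zₙ^{ℓₙ}`. -/
def Dml {n : ℕ} (ℓ : Fin n → ℕ) (f : (Fin n → ℂ) → ℂ) : (Fin n → ℂ) → ℂ :=
  (List.finRange n).foldr (fun i g => (pd i)^[ℓ i] g) f

/-- Partial sums `S_λ` of a Taylor-type series around `ζ`, with coefficients computed from a
given family `g` of (extended) partial derivatives: the coefficient of the monomial
`(z-ζ)^{N_j}` is `g (N_j) ζ / (N_{j,1}! ⋯ N_{j,n}!)`. -/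
def pSumExt {n : ℕ} (Nj : ℕ → Fin n → ℕ) (g : (Fin n → ℕ) → (Fin n → ℂ) → ℂ)
    (ζ : Fin n → ℂ) (lam : ℕ) : (Fin n → ℂ) → ℂ :=
  fun z => ∑ j ∈ Finset.range (lam + 1),
    (((∏ i, Nat.factorial (Nj j i) : ℕ) : ℂ))⁻¹ * g (Nj j) ζ * ∏ i, (z i - ζ i) ^ (Nj j i)

/-- Partial sums `S_λ(f,ζ)` of the Taylor development of `f` around `ζ`. -/
def pSum {n : ℕ} (Nj : ℕ → Fin n → ℕ) (f : (Fin n → ℂ) → ℂ)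
    (ζ : Fin n → ℂ) (lam : ℕ) : (Fin n → ℂ) → ℂ :=
  pSumExt Nj (fun ℓ => Dml ℓ f) ζ lam

/-- The space `O(Ω)` of holomorphic functions on `Ω`. -/
def Ospace (n : ℕ) (Ω : Set (Fin n → ℂ)) : Type :=
  {f : (Fin n → ℂ) → ℂ // DifferentiableOn ℂ f Ω}

/-- Topology of uniform convergence on compact subsets of `Ω` on `O(Ω)` (the compact-open
topology induced via restriction to `Ω`). -/
instance (n : ℕ) (Ω : Set (Fin n → ℂ)) : TopologicalSpace (Ospace n Ω) :=
  TopologicalSpace.induced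
    (fun f : Ospace n Ω =>
      (⟨Ω.restrict f.1, continuousOn_iff_continuous_restrict.mp f.2.continuousOn⟩ : C(Ω, ℂ)))
    inferInstance

/-- Membership in `A^∞(Ω)`: `f` is holomorphic on `Ω` and each partial derivative `D^ℓ f`
extends continuously to the closure of `Ω`. -/
def AinfMem (n : ℕ) (Ω : Set (Fin n → ℂ)) (f : (Fin n → ℂ) → ℂ) : Prop :=
  DifferentiableOn ℂ f Ω ∧
    ∀ ℓ : Fin n → ℕ, ∃ g : (Fin n → ℂ) → ℂ,
      ContinuousOn g (closure Ω) ∧ Set.EqOn g (Dml ℓ f) Ω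

/-- The space `A^∞(Ω)`. -/
def AinfSpace (n : ℕ) (Ω : Set (Fin n → ℂ)) : Type :=
  {f : (Fin n → ℂ) → ℂ // AinfMem n Ω f}

/-- The chosen continuous extension of `D^ℓ f` to the closure of `Ω`, for `f ∈ A^∞(Ω)`.
(Its restriction to the closure of `Ω` is uniquely determined.) -/
def AinfExt {n : ℕ} {Ω : Set (Fin n → ℂ)} (f : AinfSpace n Ω) (ℓ : Fin n → ℕ) :
    (Fin n → ℂ) → ℂ :=
  Classical.choose (f.2.2 ℓ)

lemma AinfExt_continuousOn {n : ℕ} {Ω : Set (Fin n → ℂ)} (f : AinfSpace n Ω) (ℓ : Fin n → ℕ) :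
    ContinuousOn (AinfExt f ℓ) (closure Ω) :=
  (Classical.choose_spec (f.2.2 ℓ)).1

lemma AinfExt_eqOn {n : ℕ} {Ω : Set (Fin n → ℂ)} (f : AinfSpace n Ω) (ℓ : Fin n → ℕ) :
    Set.EqOn (AinfExt f ℓ) (Dml ℓ f.1) Ω :=
  (Classical.choose_spec (f.2.2 ℓ)).2

/-- Topology on `A^∞(Ω)`: uniform convergence of every partial derivative on every compact
subset of the closure of `Ω`. -/
instance (n : ℕ) (Ω : Set (Fin n → ℂ)) : TopologicalSpace (AinfSpace n Ω) :=
  TopologicalSpace.induced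
    (fun f : AinfSpace n Ω => fun ℓ : Fin n → ℕ =>
      (⟨(closure Ω).restrict (AinfExt f ℓ),
        continuousOn_iff_continuous_restrict.mp (AinfExt_continuousOn f ℓ)⟩ :
          C(closure Ω, ℂ)))
    inferInstance

/-- A smooth compact curve in `ℂⁿ`: the image of an injective `C^∞` map with
nowhere-vanishing derivative, defined on a compact interval (an arc) or on the
circle (a closed curve, modelled by a 1-periodic map). -/
def IsSmoothCompactCurve {n : ℕ} (K : Set (Fin n → ℂ)) : Prop :=
  ∃ γ : ℝ → (Fin n → ℂ), ContDiff ℝ (⊤ : ℕ∞) γ ∧ (∀ t, deriv γ t ≠ 0) ∧ K = γ '' Set.Icc 0 1 ∧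
    (Set.InjOn γ (Set.Icc 0 1) ∨ (Function.Periodic γ 1 ∧ Set.InjOn γ (Set.Ico 0 1)))

/-- A disjoint union of finitely many smooth compact curves. -/
def IsFiniteUnionOfSmoothCurves {n : ℕ} (K : Set (Fin n → ℂ)) : Prop :=
  ∃ (m : ℕ) (C : Fin m → Set (Fin n → ℂ)),
    (∀ i, IsSmoothCompactCurve (C i)) ∧ Pairwise (Function.onFun Disjoint C) ∧ K = ⋃ i, C i



section Basics
open Metric

lemma norm_piSingle_one {n : ℕ} (i : Fin n) : ‖(Pi.single i 1 : Fin n → ℂ)‖ = 1 := by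
  rw [Pi.norm_single]; simp

lemma cauchy_fderiv {n : ℕ} {f : (Fin n → ℂ) → ℂ} {Ω : Set (Fin n → ℂ)} (hΩ : IsOpen Ω)
    (hf : DifferentiableOn ℂ f Ω) {z : Fin n → ℂ} {r M : ℝ} (hr : 0 < r)
    (hb : closedBall z r ⊆ Ω) (hM : ∀ w ∈ closedBall z r, ‖f w‖ ≤ M) :
    ‖fderiv ℂ f z‖ ≤ M / r := by
  have hz : z ∈ Ω := hb (mem_closedBall_self hr.le)
  have hM0 : 0 ≤ M := (norm_nonneg _).trans (hM z (mem_closedBall_self hr.le))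
  refine ContinuousLinearMap.opNorm_le_of_unit_norm (by positivity) ?_
  intro v hv
  have hmem : ∀ t : ℂ, t ∈ closedBall (0 : ℂ) r → z + t • v ∈ closedBall z r := by
    intro t ht
    simp only [mem_closedBall, dist_zero_right] at ht
    simp [dist_eq_norm, norm_smul, hv, ht]
  have hd : deriv (fun t : ℂ => f (z + t • v)) 0 = fderiv ℂ f z v := by
    have h1 : HasFDerivAt f (fderiv ℂ f z) (z + (0 : ℂ) • v) := by
      simpa using ((hf z hz).differentiableAt (hΩ.mem_nhds hz)).hasFDerivAt
    have h2 : HasDerivAt (fun t : ℂ => z + t • v) v 0 := by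
      simpa using ((hasDerivAt_id (0 : ℂ)).smul_const v).const_add z
    exact (h1.comp_hasDerivAt (0 : ℂ) h2).deriv
  rw [← hd]
  refine Complex.norm_deriv_le_of_forall_mem_sphere_norm_le hr ?_ ?_
  · apply DifferentiableOn.diffContOnCl
    have : DifferentiableOn ℂ (fun t : ℂ => f (z + t • v)) (closedBall 0 r) := by
      refine hf.comp (t := Ω) (by fun_prop) ?_
      intro t ht
      exact hb (hmem t ht)
    exact this.mono closure_ball_subset_closedBall
  · intro t ht
    exact hM _ (hmem t (sphere_subset_closedBall ht))

lemma pd_eq_deriv {n : ℕ} {f : (Fin n → ℂ) → ℂ} (i : Fin n) {z : Fin n → ℂ}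
    (hf : DifferentiableAt ℂ f z) :
    pd i f z = deriv (fun t : ℂ => f (z + t • (Pi.single i 1 : Fin n → ℂ))) 0 := by
  have h1 : HasFDerivAt f (fderiv ℂ f z) (z + (0 : ℂ) • (Pi.single i 1 : Fin n → ℂ)) := by
    simpa using hf.hasFDerivAt
  have h2 : HasDerivAt (fun t : ℂ => z + t • (Pi.single i 1 : Fin n → ℂ)) (Pi.single i 1) 0 := by
    simpa using ((hasDerivAt_id (0 : ℂ)).smul_const (Pi.single i 1 : Fin n → ℂ)).const_add z
  exact (h1.comp_hasDerivAt (0 : ℂ) h2).deriv.symm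

lemma pd_bound {n : ℕ} {f : (Fin n → ℂ) → ℂ} {Ω : Set (Fin n → ℂ)} (hΩ : IsOpen Ω)
    (hf : DifferentiableOn ℂ f Ω) (i : Fin n) {z : Fin n → ℂ} {r M : ℝ} (hr : 0 < r)
    (hb : closedBall z r ⊆ Ω) (hM : ∀ w ∈ closedBall z r, ‖f w‖ ≤ M) :
    ‖pd i f z‖ ≤ M / r := by
  have := (fderiv ℂ f z).le_of_opNorm_le (cauchy_fderiv hΩ hf hr hb hM) (Pi.single i 1)
  simpa [pd, norm_piSingle_one] using this

lemma pd_differentiableOn {n : ℕ} {f : (Fin n → ℂ) → ℂ} {Ω : Set (Fin n → ℂ)} (hΩ : IsOpen Ω)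
    (hf : DifferentiableOn ℂ f Ω) (i : Fin n) : DifferentiableOn ℂ (pd i f) Ω := by
  intro z₀ hz₀
  apply DifferentiableAt.differentiableWithinAt
  obtain ⟨R, hR, hRΩ⟩ := nhds_basis_closedBall.mem_iff.1 (hΩ.mem_nhds hz₀)
  set r := R / 3 with hrdef
  have hr : 0 < r := by positivity
  set e : Fin n → ℂ := Pi.single i 1 with he
  have hen : ‖e‖ = 1 := norm_piSingle_one i
  have hfc : ContinuousOn f Ω := hf.continuousOn
  obtain ⟨M, hM⟩ := (isCompact_closedBall z₀ R).exists_bound_of_continuousOn (hfc.mono hRΩ)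
  have hM0 : 0 ≤ M := (norm_nonneg _).trans (hM z₀ (mem_closedBall_self hR.le))
  have hcirc : ∀ z ∈ ball z₀ r, ∀ t : ℂ, ‖t‖ ≤ r → closedBall (z + t • e) r ⊆ closedBall z₀ R := by
    intro z hz t ht
    apply closedBall_subset_closedBall'
    have h1 : dist (z + t • e) z ≤ r := by simp [dist_eq_norm, norm_smul, hen, ht]
    have h2 : dist z z₀ < r := hz
    have := dist_triangle (z + t • e) z z₀
    linarith
  have hcm : ∀ z ∈ ball z₀ r, ∀ t : ℂ, ‖t‖ ≤ r → z + t • e ∈ Ω := fun z hz t ht =>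
    hRΩ (hcirc z hz t ht (mem_closedBall_self hr.le))
  have hdiff : ∀ z ∈ Ω, DifferentiableAt ℂ f z := fun z hz =>
    (hf z hz).differentiableAt (hΩ.mem_nhds hz)
  have hrepr : ∀ z ∈ ball z₀ r, pd i f z = (2 * Real.pi * Complex.I : ℂ)⁻¹ •
      ∫ θ in (0:ℝ)..2 * Real.pi, (deriv (circleMap 0 r) θ * ((circleMap 0 r θ - 0) ^ 2)⁻¹) *
        f (z + circleMap 0 r θ • e) := by
    intro z hz
    have hz' : z ∈ Ω := by simpa using hcm z hz 0 (by simpa using hr.le)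
    rw [pd_eq_deriv i (hdiff z hz')]
    have hU : IsOpen ((fun t : ℂ => z + t • e) ⁻¹' Ω) := hΩ.preimage (by fun_prop)
    rw [← Complex.two_pi_I_inv_smul_circleIntegral_sub_sq_inv_smul_of_differentiable hU
      (c := 0) (R := r) (w₀ := 0) (f := fun t : ℂ => f (z + t • e))]
    · simp only [circleIntegral, smul_eq_mul, mul_assoc]
    · intro t ht
      exact hcm z hz t (by simpa using ht)
    · exact hf.comp (by fun_prop) (fun t ht => ht)
    · simpa using hr
  have hcont : Continuous (fun θ : ℝ => deriv (circleMap 0 r) θ * ((circleMap 0 r θ - 0) ^ 2)⁻¹) := by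
    simp only [deriv_circleMap]
    refine Continuous.mul (by fun_prop) (Continuous.inv₀ (by fun_prop) ?_)
    intro θ
    simp [hr.ne']
  have hnorm : ∀ θ : ℝ, ‖deriv (circleMap 0 r) θ * ((circleMap 0 r θ - 0) ^ 2)⁻¹‖ = 1 / r := by
    intro θ
    simp [abs_of_pos hr]
    field_simp
  have hcn : ∀ θ : ℝ, ‖circleMap 0 r θ‖ ≤ r := by
    intro θ; simp [abs_of_pos hr]
  have hFc : ∀ z ∈ ball z₀ r, Continuous (fun θ : ℝ =>
      (deriv (circleMap 0 r) θ * ((circleMap 0 r θ - 0) ^ 2)⁻¹) * f (z + circleMap 0 r θ • e)) := by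
    intro z hz
    refine hcont.mul ?_
    exact hfc.comp_continuous (by fun_prop) (fun θ => hcm z hz _ (hcn θ))
  have key := intervalIntegral.hasFDerivAt_integral_of_dominated_of_fderiv_le (𝕜 := ℂ)
    (μ := MeasureTheory.volume) (s := ball z₀ r) (a := 0) (b := 2 * Real.pi) (x₀ := z₀)
    (bound := fun _ => 1 / r * (M / r))
    (F := fun z θ => (deriv (circleMap 0 r) θ * ((circleMap 0 r θ - 0) ^ 2)⁻¹) *
      f (z + circleMap 0 r θ • e))
    (F' := fun z θ => (deriv (circleMap 0 r) θ * ((circleMap 0 r θ - 0) ^ 2)⁻¹) •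
      fderiv ℂ f (z + circleMap 0 r θ • e)) (ball_mem_nhds z₀ hr) ?_ ?_ ?_ ?_ ?_ ?_
  · have h2 : DifferentiableAt ℂ (fun z => (2 * Real.pi * Complex.I : ℂ)⁻¹ •
      ∫ θ in (0:ℝ)..2 * Real.pi, (deriv (circleMap 0 r) θ * ((circleMap 0 r θ - 0) ^ 2)⁻¹) *
        f (z + circleMap 0 r θ • e)) z₀ := (key.const_smul ((2 * Real.pi * Complex.I : ℂ)⁻¹)).differentiableAt
    refine h2.congr_of_eventuallyEq ?_
    filter_upwards [ball_mem_nhds z₀ hr] with z hz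
    exact hrepr z hz
  · filter_upwards [ball_mem_nhds z₀ hr] with z hz
    exact (hFc z hz).aestronglyMeasurable
  · exact (hFc z₀ (mem_ball_self hr)).intervalIntegrable _ _
  · apply Measurable.aestronglyMeasurable
    refine hcont.measurable.smul ?_
    exact (measurable_fderiv ℂ f).comp (by fun_prop)
  · refine Eventually.of_forall fun θ _ z hz => ?_
    rw [norm_smul, hnorm]
    gcongr
    exact cauchy_fderiv hΩ hf hr ((hcirc z hz _ (hcn θ)).trans hRΩ)
      (fun w hw => hM w (hcirc z hz _ (hcn θ) hw))
  · exact intervalIntegrable_const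
  · refine Eventually.of_forall fun θ _ z hz => ?_
    have h1 := (hdiff _ (hcm z hz _ (hcn θ))).hasFDerivAt
    have h2 : HasFDerivAt (fun z => f (z + circleMap 0 r θ • e))
      (fderiv ℂ f (z + circleMap 0 r θ • e)) z := by
      have h3 := h1.comp z ((hasFDerivAt_id z).add_const (circleMap 0 r θ • e))
      rw [ContinuousLinearMap.comp_id] at h3
      exact h3
    exact h2.const_mul _

lemma hol_limit {n : ℕ} {Ω : Set (Fin n → ℂ)} (hΩ : IsOpen Ω) (F : ℕ → (Fin n → ℂ) → ℂ)
    (hF : ∀ k, DifferentiableOn ℂ (F k) Ω) (f : (Fin n → ℂ) → ℂ)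
    (h : ∀ L ⊆ Ω, IsCompact L → TendstoUniformlyOn F f atTop L) : DifferentiableOn ℂ f Ω := by
  intro z₀ hz₀
  apply DifferentiableAt.differentiableWithinAt
  obtain ⟨R, hR, hRΩ⟩ := nhds_basis_closedBall.mem_iff.1 (hΩ.mem_nhds hz₀)
  set r := R / 2 with hrdef
  have hr : 0 < r := by positivity
  have hu := h _ hRΩ (isCompact_closedBall z₀ R)
  have hsub : ∀ z ∈ ball z₀ r, closedBall z r ⊆ closedBall z₀ R := by
    intro z hz
    apply closedBall_subset_closedBall'
    have h2 : dist z z₀ < r := hz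
    linarith
  have hdiff : ∀ k, ∀ z ∈ Ω, DifferentiableAt ℂ (F k) z := fun k z hz =>
    (hF k z hz).differentiableAt (hΩ.mem_nhds hz)
  have hC : UniformCauchySeqOn (fun k => fderiv ℂ (F k)) atTop (ball z₀ r) := by
    rw [Metric.uniformCauchySeqOn_iff]
    intro ε hε
    obtain ⟨N, hN⟩ := Metric.uniformCauchySeqOn_iff.1 hu.uniformCauchySeqOn (ε * r / 2) (by positivity)
    refine ⟨N, fun a ha b hb z hz => ?_⟩
    have hzΩ : z ∈ Ω := hRΩ (hsub z hz (mem_closedBall_self hr.le))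
    rw [dist_eq_norm, ← fderiv_sub (hdiff a z hzΩ) (hdiff b z hzΩ)]
    have := cauchy_fderiv (M := ε * r / 2) hΩ ((hF a).sub (hF b)) hr ((hsub z hz).trans hRΩ) (by
      intro w hw
      have := hN a ha b hb w (hsub z hz hw)
      rw [dist_eq_norm] at this
      exact this.le)
    refine this.trans_lt ?_
    rw [div_lt_iff₀ hr]
    nlinarith
  have hlim : ∀ z : Fin n → ℂ, ∃ g, z ∈ ball z₀ r → Tendsto (fun k => fderiv ℂ (F k) z) atTop (𝓝 g) := by
    intro z
    by_cases hz : z ∈ ball z₀ r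
    · obtain ⟨g, hg⟩ := cauchySeq_tendsto_of_complete (hC.cauchySeq hz)
      exact ⟨g, fun _ => hg⟩
    · exact ⟨0, fun h => absurd h hz⟩
  choose g hg using hlim
  have hT := hC.tendstoUniformlyOn_of_tendsto (f := g) (fun z hz => hg z hz)
  refine (hasFDerivAt_of_tendstoUniformlyOn (f := F) isOpen_ball hT ?_ ?_ (mem_ball_self hr)).differentiableAt
  · intro k z hz
    exact (hdiff k z (hRΩ (hsub z hz (mem_closedBall_self hr.le)))).hasFDerivAt
  · intro z hz
    exact hu.tendsto_at (hsub z hz (mem_closedBall_self hr.le))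

end Basics

section Poly
open MvPolynomial

lemma mvEval_differentiable {n : ℕ} (R : MvPolynomial (Fin n) ℂ) : Differentiable ℂ (mvEval R) := by
  induction R using MvPolynomial.induction_on with
  | C a =>
    have : mvEval (C a : MvPolynomial (Fin n) ℂ) = fun _ => a := by ext z; simp [mvEval]
    rw [this]; exact differentiable_const a
  | add p q hp hq =>
    have : mvEval (p + q) = fun z => mvEval p z + mvEval q z := by ext z; simp [mvEval]
    rw [this]; exact hp.add hq
  | mul_X p i hp =>
    have : mvEval (p * X i) = fun z => mvEval p z * z i := by ext z; simp [mvEval]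
    rw [this]; exact hp.mul (by fun_prop)

lemma pd_mvEval {n : ℕ} (R : MvPolynomial (Fin n) ℂ) (i : Fin n) :
    pd i (mvEval R) = mvEval (pderiv i R) := by
  induction R using MvPolynomial.induction_on with
  | C a =>
    have : mvEval (C a : MvPolynomial (Fin n) ℂ) = fun _ => a := by ext z; simp [mvEval]
    ext z
    simp only [pd]
    rw [this]
    simp [mvEval]
  | add p q hp hq =>
    have : mvEval (p + q) = fun z => mvEval p z + mvEval q z := by ext z; simp [mvEval]
    ext z
    have hp' := congrFun hp z
    have hq' := congrFun hq z
    simp only [pd] at hp' hq' ⊢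
    rw [this, fderiv_fun_add (mvEval_differentiable p z) (mvEval_differentiable q z)]
    simp only [_root_.add_apply, hp', hq']
    simp [mvEval]
  | mul_X p j hp =>
    have : mvEval (p * X j) = fun z => mvEval p z * z j := by ext z; simp [mvEval]
    ext z
    have hp' := congrFun hp z
    have hX : HasFDerivAt (fun z : Fin n → ℂ => z j) (ContinuousLinearMap.proj j) z :=
      (ContinuousLinearMap.proj (R := ℂ) (φ := fun _ : Fin n => ℂ) j).hasFDerivAt
    simp only [pd] at hp' ⊢
    have hm : fderiv ℂ (fun z => mvEval p z * z j) z = _ :=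
      ((mvEval_differentiable p z).hasFDerivAt.mul hX).fderiv
    rw [this, hm]
    simp only [_root_.add_apply, _root_.smul_apply, hp',
      ContinuousLinearMap.proj_apply, smul_eq_mul]
    simp only [mvEval, Derivation.leibniz, pderiv_X, smul_eq_mul, map_add, map_mul, eval_X]
    by_cases h : i = j
    · subst h; simp
    · simp [Pi.single_apply, h, Ne.symm h]

lemma pd_shift {n : ℕ} (ζ : Fin n → ℂ) (R : MvPolynomial (Fin n) ℂ) (i : Fin n) :
    pd i (fun z => mvEval R (z - ζ)) = fun z => mvEval (pderiv i R) (z - ζ) := by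
  ext z
  rw [← pd_mvEval]
  simp only [pd]
  rw [fderiv_comp_sub]

lemma pd_iter_shift {n : ℕ} (ζ : Fin n → ℂ) (R : MvPolynomial (Fin n) ℂ) (i : Fin n) (k : ℕ) :
    (pd i)^[k] (fun z => mvEval R (z - ζ)) = fun z => mvEval ((pderiv i)^[k] R) (z - ζ) := by
  induction k with
  | zero => rfl
  | succ k ih => rw [Function.iterate_succ_apply', ih, pd_shift, Function.iterate_succ_apply']

lemma foldr_shift {n : ℕ} (ζ : Fin n → ℂ) (R : MvPolynomial (Fin n) ℂ) (ℓ : Fin n → ℕ)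
    (l : List (Fin n)) :
    l.foldr (fun i g => (pd i)^[ℓ i] g) (fun z => mvEval R (z - ζ)) =
      fun z => mvEval (l.foldr (fun i q => (pderiv i)^[ℓ i] q) R) (z - ζ) := by
  induction l with
  | nil => rfl
  | cons a l ih => rw [List.foldr_cons, ih, pd_iter_shift, List.foldr_cons]

lemma coeff_pderiv_iter {n : ℕ} (R : MvPolynomial (Fin n) ℂ) (i : Fin n) (k : ℕ) :
    ∀ m : Fin n →₀ ℕ, coeff m ((pderiv i)^[k] R) =
      coeff (m + Finsupp.single i k) R * ((m i + 1).ascFactorial k : ℕ) := by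
  induction k with
  | zero => intro m; simp
  | succ k ih =>
    intro m
    rw [Function.iterate_succ_apply', coeff_pderiv, ih, add_assoc, ← Finsupp.single_add,
      add_comm 1 k, mul_assoc]
    congr 1
    have : (m + Finsupp.single i 1 : Fin n →₀ ℕ) i = m i + 1 := by simp
    rw [this, Nat.ascFactorial_succ]
    have h := Nat.succ_ascFactorial (m i + 1) k
    rw [← h]
    push_cast
    ring

lemma coeff_foldr {n : ℕ} (R : MvPolynomial (Fin n) ℂ) (ℓ : Fin n → ℕ) (l : List (Fin n))
    (hl : l.Nodup) : ∀ m : Fin n →₀ ℕ, (∀ i ∈ l, m i = 0) →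
      coeff m (l.foldr (fun i q => (pderiv i)^[ℓ i] q) R) =
        coeff (m + (l.map (fun i => Finsupp.single i (ℓ i))).sum) R *
          ((l.map (fun i => (ℓ i).factorial)).prod : ℕ) := by
  induction l with
  | nil => intro m _; simp
  | cons a l ih =>
    intro m hm
    rw [List.nodup_cons] at hl
    rw [List.foldr_cons, coeff_pderiv_iter, ih hl.2]
    · rw [hm a (by simp), zero_add, Nat.one_ascFactorial, List.map_cons, List.sum_cons,
        List.map_cons, List.prod_cons, add_assoc]
      push_cast
      ring
    · intro i hi
      have : a ≠ i := fun h => hl.1 (h ▸ hi)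
      simp [hm i (by simp [hi]), this]

lemma Dml_shift {n : ℕ} (ζ : Fin n → ℂ) (R : MvPolynomial (Fin n) ℂ) (ℓ : Fin n → ℕ) :
    Dml ℓ (fun z => mvEval R (z - ζ)) ζ =
      coeff (Finsupp.equivFunOnFinite.symm ℓ) R * (∏ i, (ℓ i).factorial : ℕ) := by
  have h1 : ∀ Q : MvPolynomial (Fin n) ℂ, mvEval Q (ζ - ζ) = coeff 0 Q := by
    intro Q
    rw [sub_self, mvEval, ← constantCoeff_eq, eval_zero]
  rw [Dml, foldr_shift]
  beta_reduce
  rw [h1, coeff_foldr R ℓ _ (List.nodup_finRange n) 0 (by simp),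
    ← Fin.prod_univ_def, ← Fin.sum_univ_def, zero_add]
  congr 2
  ext i
  simp [Finsupp.finsetSum_apply, Finsupp.single_apply]

lemma pSum_poly {n : ℕ} (ζ : Fin n → ℂ) (Nj : ℕ → Fin n → ℕ) (hNj : Function.Bijective Nj)
    (Q : MvPolynomial (Fin n) ℂ) :
    ∃ l₀ : ℕ, ∀ l ≥ l₀, pSum Nj (mvEval Q) ζ l = mvEval Q := by
  classical
  set R : MvPolynomial (Fin n) ℂ := bind₁ (fun i => X i + C (ζ i)) Q with hR
  have hQ : mvEval Q = fun z => mvEval R (z - ζ) := by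
    ext z
    simp only [mvEval, hR]
    change _ = (eval₂Hom (RingHom.id ℂ) (z - ζ)) _
    rw [eval₂Hom_bind₁]
    change eval z Q = eval _ Q
    congr 2
    ext i
    simp
  let e : ℕ → (Fin n →₀ ℕ) := fun j => Finsupp.equivFunOnFinite.symm (Nj j)
  have he : Function.Bijective e := Finsupp.equivFunOnFinite.symm.bijective.comp hNj
  obtain ⟨g, hg1, hg2⟩ := Function.bijective_iff_has_inverse.1 he
  refine ⟨R.support.sup g, fun l hl => ?_⟩
  ext z
  have hterm : ∀ j, (((∏ i, Nat.factorial (Nj j i) : ℕ) : ℂ))⁻¹ * Dml (Nj j) (mvEval Q) ζ *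
      ∏ i, (z i - ζ i) ^ (Nj j i) = coeff (e j) R * ∏ i, (z - ζ) i ^ (e j i) := by
    intro j
    have hne : (((∏ i, Nat.factorial (Nj j i) : ℕ) : ℂ)) ≠ 0 := by
      rw [Nat.cast_ne_zero]
      exact Finset.prod_ne_zero_iff.2 fun i _ => Nat.factorial_ne_zero _
    rw [hQ, Dml_shift, mul_comm (coeff _ _), ← mul_assoc, inv_mul_cancel₀ hne, one_mul]
    rfl
  rw [pSum, pSumExt, Finset.sum_congr rfl (fun j _ => hterm j), hQ]
  simp only [mvEval]
  rw [eval_eq', ← Finset.sum_image (s := Finset.range (l + 1)) (g := e)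
    (f := fun d => coeff d R * ∏ i, (z - ζ) i ^ (d i)) he.1.injOn]
  symm
  apply Finset.sum_subset
  · intro d hd
    rw [Finset.mem_image]
    refine ⟨g d, ?_, hg2 d⟩
    have := Finset.le_sup (f := g) hd
    rw [Finset.mem_range]
    omega
  · intro d _ hd
    rw [notMem_support_iff.1 hd, zero_mul]

end Poly

section Runge
open MvPolynomial Metric

/-- Polynomials as continuous functions on a set. -/
def toC {n : ℕ} (X : Set (Fin n → ℂ)) : MvPolynomial (Fin n) ℂ →ₐ[ℂ] C(X, ℂ) :=
  aeval (fun i => (⟨fun z => z.1 i, (continuous_apply i).comp continuous_subtype_val⟩ : C(X, ℂ)))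

lemma toC_apply {n : ℕ} (X : Set (Fin n → ℂ)) (p : MvPolynomial (Fin n) ℂ) (z : X) :
    toC X p z = mvEval p z.1 := by
  induction p using MvPolynomial.induction_on with
  | C a => simp [toC, mvEval]
  | add p q hp hq => simp only [mvEval, map_add, ContinuousMap.add_apply] at *; rw [hp, hq]
  | mul_X p i hp =>
    simp only [mvEval, map_mul, ContinuousMap.mul_apply, eval_X] at *
    rw [hp]
    simp [toC]

/-- Uniform closure of the polynomials. -/
abbrev polyCl {n : ℕ} (X : Set (Fin n → ℂ)) [CompactSpace X] : Subalgebra ℂ C(X, ℂ) :=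
  (toC X).range.topologicalClosure

lemma toC_mem {n : ℕ} (X : Set (Fin n → ℂ)) [CompactSpace X] (p : MvPolynomial (Fin n) ℂ) :
    toC X p ∈ polyCl X :=
  Subalgebra.le_topologicalClosure _ ⟨p, rfl⟩

lemma exists_poly_of_mem {n : ℕ} (X : Set (Fin n → ℂ)) [CompactSpace X] (g : C(X, ℂ))
    (hg : g ∈ polyCl X) {ε : ℝ} (hε : 0 < ε) :
    ∃ q : MvPolynomial (Fin n) ℂ, ∀ z : X, ‖mvEval q z.1 - g z‖ < ε := by
  have hg' : g ∈ closure ((toC X).range : Set C(X, ℂ)) := hg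
  obtain ⟨b, ⟨q, rfl⟩, hb⟩ := Metric.mem_closure_iff.1 hg' ε hε
  refine ⟨q, fun z => ?_⟩
  have := (ContinuousMap.dist_lt_iff hε).1 hb z
  rw [dist_comm, dist_eq_norm] at this
  rw [← toC_apply]
  exact this

/-- The dilation parameters that are admissible for `L`. -/
def dilSet {n : ℕ} (Ω L : Set (Fin n → ℂ)) (ζ : Fin n → ℂ) : Set ℂ :=
  {r : ℂ | ∀ z ∈ L, ζ + r • (z - ζ) ∈ Ω}

lemma dilSet_open {n : ℕ} {Ω L : Set (Fin n → ℂ)} (ζ : Fin n → ℂ) (hΩ : IsOpen Ω)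
    (hL : IsCompact L) : IsOpen (dilSet Ω L ζ) := by
  rw [isOpen_iff_eventually]
  intro r hr
  refine hL.eventually_forall_of_forall_eventually ?_
  intro z hz
  have hc : Continuous (fun p : ℂ × (Fin n → ℂ) => ζ + p.1 • (p.2 - ζ)) := by fun_prop
  exact hc.continuousAt.eventually (hΩ.mem_nhds (hr z hz))

lemma dilSet_convex {n : ℕ} {Ω L : Set (Fin n → ℂ)} (ζ : Fin n → ℂ) (hΩ : Convex ℝ Ω) :
    Convex ℝ (dilSet Ω L ζ) := by
  intro r hr s hs a b ha hb hab z hz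
  have := hΩ (hr z hz) (hs z hz) ha hb hab
  convert this using 1
  ext i
  simp only [Pi.add_apply, Pi.smul_apply, Pi.sub_apply, smul_eq_mul, Complex.real_smul]
  have hab' : (b : ℂ) = 1 - a := by
    rw [eq_sub_iff_add_eq, add_comm]; exact_mod_cast hab
  rw [hab']
  ring

open Classical in
/-- The dilated function as an element of `C(L)`. -/
def FF {n : ℕ} (L : Set (Fin n → ℂ)) (ζ : Fin n → ℂ) (f : (Fin n → ℂ) → ℂ) (r : ℂ) : C(L, ℂ) :=
  if h : Continuous (fun z : L => f (ζ + r • (z.1 - ζ))) then ⟨_, h⟩ else 0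

lemma FF_apply {n : ℕ} {Ω L : Set (Fin n → ℂ)} {ζ : Fin n → ℂ} {f : (Fin n → ℂ) → ℂ}
    (hf : ContinuousOn f Ω) {r : ℂ} (hr : r ∈ dilSet Ω L ζ) (z : L) :
    FF L ζ f r z = f (ζ + r • (z.1 - ζ)) := by
  have h : Continuous (fun z : L => f (ζ + r • (z.1 - ζ))) :=
    hf.comp_continuous (by fun_prop) (fun z => hr z.1 z.2)
  rw [FF, dif_pos h]
  rfl

lemma FF_continuousOn {n : ℕ} {Ω L : Set (Fin n → ℂ)} {ζ : Fin n → ℂ} {f : (Fin n → ℂ) → ℂ}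
    (hf : ContinuousOn f Ω) : ContinuousOn (FF L ζ f) (dilSet Ω L ζ) := by
  rw [continuousOn_iff_continuous_domRestrict]
  apply ContinuousMap.continuous_of_continuous_uncurry
  have : (Function.uncurry fun (x : dilSet Ω L ζ) (y : L) => ((dilSet Ω L ζ).domRestrict (FF L ζ f) x) y)
      = fun p : dilSet Ω L ζ × L => f (ζ + p.1.1 • (p.2.1 - ζ)) := by
    ext ⟨r, z⟩
    exact FF_apply hf r.2 z
  rw [this]
  exact hf.comp_continuous (by fun_prop) (fun p => p.1.2 p.2.1 p.2.2)

lemma line_differentiableOn {n : ℕ} {Ω L : Set (Fin n → ℂ)} {ζ : Fin n → ℂ}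
    {f : (Fin n → ℂ) → ℂ} (hf : DifferentiableOn ℂ f Ω) (z : L) :
    DifferentiableOn ℂ (fun r : ℂ => f (ζ + r • (z.1 - ζ))) (dilSet Ω L ζ) :=
  hf.comp (by fun_prop) (fun _ hr => hr z.1 z.2)

lemma FF_analytic {n : ℕ} {Ω L : Set (Fin n → ℂ)} [CompactSpace L] {ζ : Fin n → ℂ}
    {f : (Fin n → ℂ) → ℂ} (hΩ : IsOpen Ω) (hf : DifferentiableOn ℂ f Ω) :
    AnalyticOnNhd ℂ (FF L ζ f) (dilSet Ω L ζ) := by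
  intro c hc
  have hL : IsCompact L := isCompact_iff_compactSpace.2 inferInstance
  have hop := dilSet_open (L := L) ζ hΩ hL
  obtain ⟨ρ, hρ, hsub⟩ := nhds_basis_closedBall.mem_iff.1 (hop.mem_nhds hc)
  have hcont := FF_continuousOn (L := L) (ζ := ζ) hf.continuousOn
  lift ρ to NNReal using hρ.le
  have hρ' : 0 < ρ := by exact_mod_cast hρ
  have hsph : ContinuousOn (FF L ζ f) (sphere c ρ) :=
    hcont.mono (sphere_subset_closedBall.trans hsub)
  have hps := hasFPowerSeriesOn_cauchy_integral (hsph.circleIntegrable hρ.le) hρ'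
  refine hps.analyticAt.congr ?_
  filter_upwards [ball_mem_nhds c hρ] with w hw
  ext z
  have hev : ∀ g : C(L, ℂ), ContinuousMap.evalCLM ℂ z g = g z := fun g => rfl
  rw [FF_apply hf.continuousOn (hsub (ball_subset_closedBall hw)), ← hev, map_smul]
  have hd := line_differentiableOn (L := L) (ζ := ζ) hf z
  rw [← Complex.two_pi_I_inv_smul_circleIntegral_sub_inv_smul_of_differentiable_on_off_countable
    (s := ∅) (c := c) (R := ρ) (f := fun r : ℂ => f (ζ + r • (z.1 - ζ))) Set.countable_empty hw
    (hd.continuousOn.mono hsub)]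
  · congr 1
    rw [circleIntegral, circleIntegral, ← ContinuousLinearMap.intervalIntegral_comp_comm]
    · refine intervalIntegral.integral_congr fun θ _ => ?_
      simp only [hev, ContinuousMap.smul_apply]
      rw [FF_apply hf.continuousOn (hsub (circleMap_mem_closedBall c hρ.le θ))]
    · have hci : CircleIntegrable (fun s => (s - w)⁻¹ • FF L ζ f s) c ρ := by
        have hinv : ContinuousOn (fun s : ℂ => (s - w)⁻¹) (sphere c ρ) := by
          refine ContinuousOn.inv₀ (by fun_prop) ?_
          intro s hs h0
          rw [sub_eq_zero] at h0
          subst h0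
          rw [mem_sphere] at hs
          rw [mem_ball] at hw
          linarith
        exact ContinuousOn.circleIntegrable hρ.le (hinv.fun_smul hsph)
      exact hci.out
  · intro x hx
    exact (hd x (hsub (ball_subset_closedBall hx.1))).differentiableAt
      (hop.mem_nhds (hsub (ball_subset_closedBall hx.1)))

lemma FF_deriv {n : ℕ} {Ω L : Set (Fin n → ℂ)} [CompactSpace L] {ζ : Fin n → ℂ}
    {f : (Fin n → ℂ) → ℂ} (hΩ : IsOpen Ω) (hf : DifferentiableOn ℂ f Ω) {r : ℂ}
    (hr : r ∈ dilSet Ω L ζ) :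
    deriv (FF L ζ f) r = ∑ i, toC L (X i - C (ζ i)) * FF L ζ (pd i f) r := by
  have hL : IsCompact L := isCompact_iff_compactSpace.2 inferInstance
  have hop := dilSet_open (L := L) ζ hΩ hL
  have hD := (FF_analytic (L := L) (ζ := ζ) hΩ hf r hr).differentiableAt.hasDerivAt
  ext z
  have h1 : HasDerivAt (fun s => FF L ζ f s z) (deriv (FF L ζ f) r z) r := by
    have := (ContinuousMap.evalCLM ℂ z : C(L, ℂ) →L[ℂ] ℂ).hasFDerivAt.comp_hasDerivAt r hD
    exact this
  have hz := hr z.1 z.2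
  have h2 : HasDerivAt (fun s : ℂ => f (ζ + s • (z.1 - ζ)))
      (fderiv ℂ f (ζ + r • (z.1 - ζ)) (z.1 - ζ)) r := by
    have ha : HasFDerivAt f (fderiv ℂ f (ζ + r • (z.1 - ζ))) (ζ + r • (z.1 - ζ)) :=
      ((hf _ hz).differentiableAt (hΩ.mem_nhds hz)).hasFDerivAt
    have hb : HasDerivAt (fun s : ℂ => ζ + s • (z.1 - ζ)) (z.1 - ζ) r := by
      simpa using ((hasDerivAt_id r).smul_const (z.1 - ζ)).const_add ζ
    exact ha.comp_hasDerivAt r hb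
  have h3 : HasDerivAt (fun s => FF L ζ f s z)
      (fderiv ℂ f (ζ + r • (z.1 - ζ)) (z.1 - ζ)) r := by
    refine h2.congr_of_eventuallyEq ?_
    filter_upwards [hop.mem_nhds hr] with s hs
    exact FF_apply hf.continuousOn hs z
  rw [h1.unique h3, ContinuousMap.sum_apply]
  have hsum : z.1 - ζ = ∑ i, (z.1 i - ζ i) • (Pi.single i 1 : Fin n → ℂ) := by
    ext j
    simp [Finset.sum_apply, Pi.single_apply]
  have hT : ∀ T : (Fin n → ℂ) →L[ℂ] ℂ,
      T (z.1 - ζ) = ∑ i, (z.1 i - ζ i) * T (Pi.single i 1) := by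
    intro T
    conv_lhs => rw [hsum]
    simp [map_sum]
  rw [hT]
  refine Finset.sum_congr rfl fun i _ => ?_
  rw [ContinuousMap.mul_apply, toC_apply,
    FF_apply (pd_differentiableOn hΩ hf i).continuousOn hr]
  simp [mvEval, pd]

lemma FF_iteratedDeriv_mem {n : ℕ} {Ω L : Set (Fin n → ℂ)} [CompactSpace L] {ζ : Fin n → ℂ}
    (hΩ : IsOpen Ω) (hζ : ζ ∈ Ω) (k : ℕ) : ∀ f : (Fin n → ℂ) → ℂ, DifferentiableOn ℂ f Ω →
    iteratedDeriv k (FF L ζ f) 0 ∈ polyCl L := by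
  have hL : IsCompact L := isCompact_iff_compactSpace.2 inferInstance
  have hop := dilSet_open (L := L) ζ hΩ hL
  have h0 : (0 : ℂ) ∈ dilSet Ω L ζ := by intro z _; simpa using hζ
  induction k with
  | zero =>
    intro f hf
    rw [iteratedDeriv_zero]
    have : FF L ζ f 0 = toC L (C (f ζ)) := by
      ext z
      rw [FF_apply hf.continuousOn h0, toC_apply]
      simp [mvEval]
    rw [this]
    exact toC_mem _ _
  | succ k ih =>
    intro f hf
    rw [iteratedDeriv_succ']
    have he : deriv (FF L ζ f) =ᶠ[𝓝 0]
        fun r => ∑ i, toC L (X i - C (ζ i)) * FF L ζ (pd i f) r := by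
      filter_upwards [hop.mem_nhds h0] with r hr
      exact FF_deriv hΩ hf hr
    have hcd : ∀ i, ContDiffAt ℂ k (FF L ζ (pd i f)) 0 := fun i =>
      (FF_analytic (L := L) (ζ := ζ) hΩ (pd_differentiableOn hΩ hf i) 0 h0).contDiffAt
    rw [he.iteratedDeriv_eq k, iteratedDeriv_fun_sum]
    · refine Subalgebra.sum_mem _ fun i _ => ?_
      rw [iteratedDeriv_const_mul _ (hcd i)]
      exact Subalgebra.mul_mem _ (toC_mem _ _) (ih _ (pd_differentiableOn hΩ hf i))
    · intro i _
      exact contDiffAt_const.mul (hcd i)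

lemma FF_one_mem {n : ℕ} {Ω L : Set (Fin n → ℂ)} [CompactSpace L] {ζ : Fin n → ℂ}
    (hΩ : IsOpen Ω) (hcv : Convex ℝ Ω) (hζ : ζ ∈ Ω) (hLΩ : L ⊆ Ω) (f : (Fin n → ℂ) → ℂ)
    (hf : DifferentiableOn ℂ f Ω) : FF L ζ f 1 ∈ polyCl L := by
  have hL : IsCompact L := isCompact_iff_compactSpace.2 inferInstance
  have hop := dilSet_open (L := L) ζ hΩ hL
  have h0 : (0 : ℂ) ∈ dilSet Ω L ζ := by intro z _; simpa using hζ
  have h1 : (1 : ℂ) ∈ dilSet Ω L ζ := by intro z hz; simpa using hLΩ hz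
  have han := FF_analytic (L := L) (ζ := ζ) hΩ hf
  let S : Submodule ℂ C(L, ℂ) := Subalgebra.toSubmodule (polyCl L)
  have hScl : IsClosed (S : Set C(L, ℂ)) := Subalgebra.isClosed_topologicalClosure _
  obtain ⟨ρ, hρ, hsub⟩ := nhds_basis_ball.mem_iff.1 (hop.mem_nhds h0)
  have hmem : ∀ r ∈ ball (0 : ℂ) ρ, FF L ζ f r ∈ S := by
    intro r hr
    have hs := Complex.hasSum_taylorSeries_on_ball (han.differentiableOn.mono hsub) hr
    refine hScl.mem_of_tendsto hs (Eventually.of_forall fun s => ?_)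
    refine Submodule.sum_mem _ fun k _ => Submodule.smul_mem _ _ (Submodule.smul_mem _ _ ?_)
    exact FF_iteratedDeriv_mem hΩ hζ k f hf
  have hq : AnalyticOnNhd ℂ (S.mkQL ∘ FF L ζ f) (dilSet Ω L ζ) := S.mkQL.comp_analyticOnNhd han
  have hz := hq.eqOn_zero_of_preconnected_of_eventuallyEq_zero
    (dilSet_convex ζ hcv).isPreconnected h0 (by
      filter_upwards [ball_mem_nhds (0 : ℂ) hρ] with r hr
      simpa using hmem r hr) h1
  have : FF L ζ f 1 ∈ S := by simpa using hz
  exact this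

lemma poly_approx {n : ℕ} {Ω L : Set (Fin n → ℂ)} {ζ : Fin n → ℂ}
    (hΩ : IsOpen Ω) (hcv : Convex ℝ Ω) (hζ : ζ ∈ Ω) (hLΩ : L ⊆ Ω) (hL : IsCompact L)
    (f : (Fin n → ℂ) → ℂ) (hf : DifferentiableOn ℂ f Ω) {ε : ℝ} (hε : 0 < ε) :
    ∃ q : MvPolynomial (Fin n) ℂ, ∀ z ∈ L, ‖mvEval q z - f z‖ < ε := by
  haveI : CompactSpace L := isCompact_iff_compactSpace.1 hL
  obtain ⟨q, hq⟩ := exists_poly_of_mem L _ (FF_one_mem hΩ hcv hζ hLΩ f hf) hε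
  refine ⟨q, fun z hz => ?_⟩
  have h1 : (1 : ℂ) ∈ dilSet Ω L ζ := by intro z hz; simpa using hLΩ hz
  have := hq ⟨z, hz⟩
  rw [FF_apply hf.continuousOn h1] at this
  simpa using this

end Runge

section Separation
open MvPolynomial Metric

lemma unit_exp {B : Type*} [NormedCommRing B] [NormedAlgebra ℂ B] [CompleteSpace B] (x : B)
    (h : ∀ z ∈ spectrum ℂ x, z.re ≠ 0) : IsUnit (1 + NormedSpace.exp x) := by
  by_contra hu
  obtain ⟨φ, hφ⟩ := WeakDual.CharacterSpace.exists_apply_eq_zero hu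
  letI : NormedAlgebra ℚ B := NormedAlgebra.restrictScalars ℚ ℂ B
  have hc : Continuous φ := (WeakDual.CharacterSpace.toCLM φ).continuous
  have h1 : φ (NormedSpace.exp x) = NormedSpace.exp (φ x) := NormedSpace.map_exp φ hc x
  rw [map_add, map_one, h1, ← Complex.exp_eq_exp_ℂ] at hφ
  have h2 : Complex.exp (φ x) = -1 := by linear_combination hφ
  have h3 : Real.exp (φ x).re = 1 := by
    rw [← Complex.norm_exp, h2]; simp
  exact h _ (AlgHom.apply_mem_spectrum φ x) (Real.exp_eq_one_iff _ |>.1 h3)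

lemma sep_aux {n : ℕ} (X : Set (Fin n → ℂ)) [CompactSpace X] (p : MvPolynomial (Fin n) ℂ)
    (hp : ∀ z ∈ X, (mvEval p z).re ≠ 0) :
    ∃ b ∈ polyCl X, ∀ z : X, b z * (1 + Complex.exp (mvEval p z.1)) = 1 := by
  have hcl : IsClosed ((polyCl X : Subalgebra ℂ C(X, ℂ)) : Set C(X, ℂ)) :=
    Subalgebra.isClosed_topologicalClosure _
  have hcs : CompleteSpace (polyCl X) := hcl.completeSpace_coe
  let x : polyCl X := ⟨toC X p, toC_mem X p⟩
  have hspec : ∀ z ∈ spectrum ℂ x, z.re ≠ 0 := by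
    intro z hz h0
    have hb := Subalgebra.spectrum_isBounded_connectedComponentIn (polyCl X) x hz
    have hline : {w : ℂ | w.re = 0} ⊆ connectedComponentIn (spectrum ℂ (x : C(X, ℂ)))ᶜ z := by
      refine IsPreconnected.subset_connectedComponentIn ?_ h0 ?_
      · have : Convex ℝ {w : ℂ | w.re = 0} := by
          intro a ha b hb s t _ _ _
          simp only [mem_setOf_eq] at *
          simp [ha, hb]
        exact this.isPreconnected
      · intro w hw
        rw [ContinuousMap.spectrum_eq_range]
        rintro ⟨y, rfl⟩
        refine hp y.1 y.2 ?_
        rw [← toC_apply X p y]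
        exact hw
    obtain ⟨R, hR⟩ := isBounded_iff_forall_norm_le.1 (hb.subset hline)
    have := hR (((|R| + 1 : ℝ) : ℂ) * Complex.I) (by simp)
    rw [norm_mul, Complex.norm_I, mul_one, Complex.norm_real, Real.norm_eq_abs,
      abs_of_pos (by positivity)] at this
    linarith [le_abs_self R]
  obtain ⟨b, hb⟩ := (unit_exp x hspec).exists_left_inv
  refine ⟨b.1, b.2, fun z => ?_⟩
  letI : NormedAlgebra ℚ (polyCl X) := NormedAlgebra.restrictScalars ℚ ℂ (polyCl X)
  let ev : polyCl X →+* ℂ :=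
    { toFun := fun g => g.1 z
      map_one' := rfl
      map_mul' := fun _ _ => rfl
      map_zero' := rfl
      map_add' := fun _ _ => rfl }
  have hev : Continuous ev := (continuous_eval_const z).comp continuous_subtype_val
  have h1 : ev (NormedSpace.exp x) = NormedSpace.exp (ev x) := NormedSpace.map_exp ev hev x
  have h2 := congrArg ev hb
  rw [map_mul, map_add, map_one, h1, ← Complex.exp_eq_exp_ℂ] at h2
  have h3 : ev x = mvEval p z.1 := toC_apply X p z
  rw [h3] at h2
  exact h2

lemma separation {n : ℕ} {Ω L K : Set (Fin n → ℂ)} (hΩ : IsOpen Ω) (hcv : Convex ℝ Ω)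
    (hLΩ : L ⊆ Ω) (hL : IsCompact L) (hK : IsCompact K) (hKcv : Convex ℝ K) (hd : K ∩ Ω = ∅)
    {η : ℝ} (hη : 0 < η) :
    ∃ s : MvPolynomial (Fin n) ℂ, (∀ z ∈ L, ‖mvEval s z - 1‖ < η) ∧ ∀ z ∈ K, ‖mvEval s z‖ < η := by
  obtain ⟨ℓ, u, hl, hu⟩ := RCLike.geometric_hahn_banach_open (𝕜 := ℂ) hcv hΩ hKcv
    (Set.disjoint_iff_inter_eq_empty.2 (by rw [inter_comm]; exact hd))
  simp only [RCLike.re_eq_complex_re] at hl hu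
  have hmax : ∃ v < u, ∀ z ∈ L, (ℓ z).re ≤ v := by
    rcases L.eq_empty_or_nonempty with rfl | hne
    · exact ⟨u - 1, by linarith, by simp⟩
    · obtain ⟨z0, hz0, hm⟩ := hL.exists_isMaxOn hne
        (f := fun z => (ℓ z).re) (by fun_prop)
      exact ⟨(ℓ z0).re, hl _ (hLΩ hz0), fun z hz => hm hz⟩
  obtain ⟨v, hvu, hv⟩ := hmax
  set c : ℝ := (u + v) / 2 with hc
  set δ : ℝ := (u - v) / 2 with hδ
  have hδ0 : 0 < δ := by linarith
  have hX : IsCompact (L ∪ K) := hL.union hK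
  have : CompactSpace (L ∪ K : Set (Fin n → ℂ)) := isCompact_iff_compactSpace.1 hX
  -- choose the exponent
  have hq : ∃ N : ℕ, 0 < N ∧ 8 / η + 2 < Real.exp (N * δ) := by
    have ht : Tendsto (fun N : ℕ => Real.exp (N * δ)) atTop atTop :=
      Real.tendsto_exp_atTop.comp (tendsto_natCast_atTop_atTop.atTop_mul_const hδ0)
    obtain ⟨N, h1, h2⟩ := ((eventually_gt_atTop 0).and (ht.eventually_gt_atTop (8 / η + 2))).exists
    exact ⟨N, h1, h2⟩
  obtain ⟨N, hN0, hN⟩ := hq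
  have hN0' : (0 : ℝ) < N := by exact_mod_cast hN0
  set p : MvPolynomial (Fin n) ℂ :=
    C (N : ℂ) * (∑ i, C (ℓ (Pi.single i 1)) * X i - C (c : ℂ)) with hp
  have hpe : ∀ z, mvEval p z = N * (ℓ z - c) := by
    intro z
    have hz : ℓ z = ∑ i, ℓ (Pi.single i 1) * z i := by
      have hsum : z = ∑ i, z i • (Pi.single i 1 : Fin n → ℂ) := by
        ext j
        simp [Finset.sum_apply, Pi.single_apply]
      conv_lhs => rw [hsum]
      simp [map_sum, mul_comm]
    rw [hz]
    simp [hp, mvEval]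
  have hre : ∀ z, (mvEval p z).re = N * ((ℓ z).re - c) := by
    intro z
    rw [hpe]
    simp [Complex.mul_re]
  have hreL : ∀ z ∈ L, (mvEval p z).re ≤ -(N * δ) := by
    intro z hz
    rw [hre]
    have := hv z hz
    nlinarith
  have hreK : ∀ z ∈ K, N * δ ≤ (mvEval p z).re := by
    intro z hz
    rw [hre]
    have := hu z hz
    nlinarith
  have hNδ : 0 < N * δ := by positivity
  obtain ⟨b, hb, hbe⟩ := sep_aux (L ∪ K) p (by
    rintro z (hz | hz)
    · have := hreL z hz; intro h; linarith
    · have := hreK z hz; intro h; linarith)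
  obtain ⟨s, hs⟩ := exists_poly_of_mem (L ∪ K) b hb (half_pos hη)
  have hη2 : 8 / η * η = 8 := by field_simp
  refine ⟨s, fun z hz => ?_, fun z hz => ?_⟩
  · have h1 := hs ⟨z, Or.inl hz⟩
    have h2 := hbe ⟨z, Or.inl hz⟩
    have h3 := hreL z hz
    set w := b ⟨z, Or.inl hz⟩
    simp only at h1 h2
    set e := Complex.exp (mvEval p z) with he
    have hen : ‖e‖ * Real.exp (N * δ) ≤ 1 := by
      rw [he, Complex.norm_exp, ← Real.exp_add, Real.exp_le_one_iff]; linarith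
    have h4 : ‖w - 1‖ = ‖w‖ * ‖e‖ := by
      rw [← norm_mul, ← norm_neg]; congr 1; linear_combination -h2
    have h5 : 1 ≤ ‖w‖ * (1 + ‖e‖) ∧ ‖w‖ * (1 - ‖e‖) ≤ 1 := by
      have h6 : ‖w‖ * ‖1 + e‖ = 1 := by rw [← norm_mul, h2, norm_one]
      have h7 : ‖1 + e‖ ≤ 1 + ‖e‖ := by simpa using norm_add_le (1 : ℂ) e
      have h8 : 1 - ‖e‖ ≤ ‖1 + e‖ := by simpa using norm_sub_le_norm_add (1 : ℂ) e
      constructor <;> nlinarith [norm_nonneg w]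
    have h9 : ‖w - 1‖ < η / 2 := by
      rw [h4]
      have hE : ‖e‖ * (8 / η + 2) ≤ 1 :=
        le_trans (mul_le_mul_of_nonneg_left hN.le (norm_nonneg e)) hen
      have hη3 : 0 < 8 / η := by positivity
      have he2 : ‖e‖ ≤ 1 / 2 := by nlinarith [norm_nonneg e]
      have hw2 : ‖w‖ ≤ 2 := by nlinarith [norm_nonneg w]
      have := norm_nonneg e
      have hE2 : ‖e‖ * 8 ≤ η := by
        have := mul_le_mul_of_nonneg_right hE hη.le
        nlinarith
      nlinarith
    calc ‖mvEval s z - 1‖ = ‖(mvEval s z - w) + (w - 1)‖ := by congr 1; ring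
      _ ≤ _ := norm_add_le _ _
      _ < η := by linarith
  · have h1 := hs ⟨z, Or.inr hz⟩
    have h2 := hbe ⟨z, Or.inr hz⟩
    have h3 := hreK z hz
    set w := b ⟨z, Or.inr hz⟩
    simp only at h1 h2
    set e := Complex.exp (mvEval p z) with he
    have hen : Real.exp (N * δ) ≤ ‖e‖ := by
      rw [he, Complex.norm_exp, Real.exp_le_exp]; exact h3
    have h6 : ‖w‖ * ‖1 + e‖ = 1 := by rw [← norm_mul, h2, norm_one]
    have h8 : ‖e‖ - 1 ≤ ‖1 + e‖ := by
      rw [add_comm]; simpa using norm_sub_le_norm_add e (1 : ℂ)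
    have h9 : ‖w‖ < η / 2 := by
      by_contra hcon
      push Not at hcon
      have : η / 2 * (8 / η + 1) < ‖w‖ * ‖1 + e‖ := by
        refine mul_lt_mul_of_le_of_lt_of_pos_of_nonneg hcon (by linarith) (by positivity) (by positivity)
      nlinarith
    calc ‖mvEval s z‖ = ‖(mvEval s z - w) + w‖ := by congr 1; ring
      _ ≤ _ := norm_add_le _ _
      _ < η := by linarith

lemma runge_two {n : ℕ} {Ω L K : Set (Fin n → ℂ)} {ζ : Fin n → ℂ} (hΩ : IsOpen Ω)
    (hcv : Convex ℝ Ω) (hζ : ζ ∈ Ω)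
    (hLΩ : L ⊆ Ω) (hL : IsCompact L) (hK : IsCompact K) (hKcv : Convex ℝ K) (hd : K ∩ Ω = ∅)
    (f : (Fin n → ℂ) → ℂ) (hf : DifferentiableOn ℂ f Ω) (P : MvPolynomial (Fin n) ℂ)
    {ε : ℝ} (hε : 0 < ε) :
    ∃ Q : MvPolynomial (Fin n) ℂ, (∀ z ∈ L, ‖mvEval Q z - f z‖ < ε) ∧
      ∀ z ∈ K, ‖mvEval Q z - mvEval P z‖ < ε := by
  obtain ⟨q, hq⟩ := poly_approx hΩ hcv hζ hLΩ hL f hf (half_pos hε)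
  obtain ⟨M, hM⟩ := (hL.union hK).exists_bound_of_continuousOn
    (f := fun z => mvEval q z - mvEval P z)
    ((mvEval_differentiable q).continuous.sub (mvEval_differentiable P).continuous).continuousOn
  have hM1 : 0 < |M| + 1 := by positivity
  obtain ⟨s, hsL, hsK⟩ := separation hΩ hcv hLΩ hL hK hKcv hd
    (η := ε / 2 / (|M| + 1)) (by positivity)
  have key : ∀ a b : ℂ, ‖a‖ < ε / 2 / (|M| + 1) → ‖b‖ ≤ M → ‖a * b‖ < ε / 2 := by
    intro a b ha hb
    rw [norm_mul]
    rw [lt_div_iff₀ hM1] at ha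
    have : ‖b‖ ≤ |M| + 1 := by linarith [le_abs_self M]
    nlinarith [norm_nonneg a]
  refine ⟨P + s * (q - P), fun z hz => ?_, fun z hz => ?_⟩
  · have h1 := hq z hz
    have h2 := key _ _ (hsL z hz) (hM z (Or.inl hz))
    calc _ = ‖(mvEval s z - 1) * (mvEval q z - mvEval P z) + (mvEval q z - f z)‖ := by
          congr 1; simp only [mvEval, map_add, map_mul, map_sub]; ring
      _ ≤ _ := norm_add_le _ _
      _ < ε := by linarith
  · have h2 := key _ _ (hsK z hz) (hM z (Or.inr hz))
    calc _ = ‖mvEval s z * (mvEval q z - mvEval P z)‖ := by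
          congr 1; simp only [mvEval, map_add, map_mul, map_sub]; ring
      _ < ε := by linarith

end Separation

section OTop
open Metric

/-- Restriction to `Ω` as a continuous function. -/
def resC {n : ℕ} {Ω : Set (Fin n → ℂ)} (f : Ospace n Ω) : C(Ω, ℂ) :=
  ⟨Ω.restrict f.1, continuousOn_iff_continuous_restrict.mp f.2.continuousOn⟩

lemma resC_apply {n : ℕ} {Ω : Set (Fin n → ℂ)} (f : Ospace n Ω) (z : Ω) :
    resC f z = f.1 z.1 := rfl

lemma resC_inducing {n : ℕ} {Ω : Set (Fin n → ℂ)} :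
    IsInducing (resC : Ospace n Ω → C(Ω, ℂ)) := ⟨rfl⟩

lemma tendsto_O {n : ℕ} {Ω : Set (Fin n → ℂ)} {ι : Type*} {l : Filter ι} {F : ι → Ospace n Ω}
    {f : Ospace n Ω} :
    Tendsto F l (𝓝 f) ↔ ∀ L ⊆ Ω, IsCompact L → TendstoUniformlyOn (fun i => (F i).1) f.1 l L := by
  rw [resC_inducing.tendsto_nhds_iff, ContinuousMap.tendsto_iff_forall_isCompact_tendstoUniformlyOn]
  constructor
  · intro h L hLΩ hL
    have h1 := h (Subtype.val ⁻¹' L) (Topology.IsInducing.subtypeVal.isCompact_preimage_iff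
      (by simpa using hLΩ) |>.2 hL)
    rw [tendstoUniformlyOn_iff] at h1 ⊢
    intro ε hε
    filter_upwards [h1 ε hε] with i hi z hz
    exact hi ⟨z, hLΩ hz⟩ hz
  · intro h L hL
    have h1 := h (Subtype.val '' L) (by simp) (hL.image continuous_subtype_val)
    rw [tendstoUniformlyOn_iff] at h1 ⊢
    intro ε hε
    filter_upwards [h1 ε hε] with i hi z hz
    exact hi z.1 ⟨z, hz, rfl⟩

/-- Partial derivative as an operator. -/
def pdO {n : ℕ} {Ω : Set (Fin n → ℂ)} (hΩ : IsOpen Ω) (i : Fin n) (f : Ospace n Ω) : Ospace n Ω :=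
  ⟨pd i f.1, pd_differentiableOn hΩ f.2 i⟩

lemma pdO_continuous {n : ℕ} {Ω : Set (Fin n → ℂ)} (hΩ : IsOpen Ω) (i : Fin n) :
    Continuous (pdO hΩ i) := by
  rw [continuous_iff_continuousAt]
  intro f
  rw [ContinuousAt, tendsto_O]
  intro L hLΩ hL
  obtain ⟨r, hr, hsub⟩ := hL.exists_cthickening_subset_open hΩ hLΩ
  have hc : IsCompact (cthickening r L) := hL.cthickening
  have h := (tendsto_O (l := 𝓝 f) (F := id)).1 tendsto_id _ hsub hc
  rw [tendstoUniformlyOn_iff] at h ⊢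
  intro ε hε
  filter_upwards [h (ε / 2 * r) (by positivity)] with g hg z hz
  have hball : closedBall z r ⊆ cthickening r L := closedBall_subset_cthickening hz r
  have hb := pd_bound (f := fun z => f.1 z - g.1 z) (M := ε / 2 * r) hΩ (f.2.sub g.2) i hr
    (hball.trans hsub) (fun w hw => by
      have := hg w (hball hw)
      rw [dist_eq_norm] at this
      exact this.le)
  have he : pd i (fun z => f.1 z - g.1 z) z = pd i f.1 z - pd i g.1 z := by
    have h1 := (f.2 z (hLΩ hz)).differentiableAt (hΩ.mem_nhds (hLΩ hz))
    have h2 := (g.2 z (hLΩ hz)).differentiableAt (hΩ.mem_nhds (hLΩ hz))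
    simp only [pd]
    rw [fderiv_fun_sub h1 h2]
    rfl
  rw [he, mul_div_cancel_right₀ _ hr.ne'] at hb
  rw [dist_eq_norm]
  exact hb.trans_lt (by linarith)

/-- Iterated partial derivative as an operator. -/
def DO {n : ℕ} {Ω : Set (Fin n → ℂ)} (hΩ : IsOpen Ω) (ℓ : Fin n → ℕ) (f : Ospace n Ω) :
    Ospace n Ω :=
  (List.finRange n).foldr (fun i g => (pdO hΩ i)^[ℓ i] g) f

lemma pdO_iter_val {n : ℕ} {Ω : Set (Fin n → ℂ)} (hΩ : IsOpen Ω) (i : Fin n) (k : ℕ) :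
    ∀ f : Ospace n Ω, ((pdO hΩ i)^[k] f).1 = (pd i)^[k] f.1 := by
  induction k with
  | zero => intro f; rfl
  | succ k ih => intro f; rw [Function.iterate_succ_apply, Function.iterate_succ_apply, ih]; rfl

lemma DO_val {n : ℕ} {Ω : Set (Fin n → ℂ)} (hΩ : IsOpen Ω) (ℓ : Fin n → ℕ) (f : Ospace n Ω) :
    (DO hΩ ℓ f).1 = Dml ℓ f.1 := by
  unfold DO Dml
  induction List.finRange n with
  | nil => rfl
  | cons a l ih => rw [List.foldr_cons, List.foldr_cons, pdO_iter_val, ih]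

lemma DO_continuous {n : ℕ} {Ω : Set (Fin n → ℂ)} (hΩ : IsOpen Ω) (ℓ : Fin n → ℕ) :
    Continuous (DO hΩ ℓ) := by
  unfold DO
  induction List.finRange n with
  | nil => exact continuous_id
  | cons a l ih => exact ((pdO_continuous hΩ a).iterate (ℓ a)).comp ih

lemma eval_continuous {n : ℕ} {Ω : Set (Fin n → ℂ)} (ζ : Fin n → ℂ) (hζ : ζ ∈ Ω) :
    Continuous (fun f : Ospace n Ω => f.1 ζ) :=
  (continuous_eval_const (F := C(Ω, ℂ)) (⟨ζ, hζ⟩ : Ω)).comp resC_inducing.continuous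

lemma pSum_continuous {n : ℕ} {Ω : Set (Fin n → ℂ)} (hΩ : IsOpen Ω) (ζ : Fin n → ℂ) (hζ : ζ ∈ Ω)
    (Nj : ℕ → Fin n → ℕ) (l : ℕ) :
    Continuous (fun p : Ospace n Ω × (Fin n → ℂ) => pSum Nj p.1.1 ζ l p.2) := by
  have h : ∀ ℓ, Continuous (fun p : Ospace n Ω × (Fin n → ℂ) => Dml ℓ p.1.1 ζ) := by
    intro ℓ
    have := (eval_continuous ζ hζ).comp ((DO_continuous hΩ ℓ).comp
      (continuous_fst (X := Ospace n Ω) (Y := Fin n → ℂ)))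
    convert this using 2 with p
    simp only [Function.comp, DO_val]
  unfold pSum pSumExt
  refine continuous_finsetSum _ fun j _ => ?_
  refine (continuous_const.mul (h _)).mul ?_
  fun_prop

/-- The basic approximation sets. -/
def Eset {n : ℕ} {Ω : Set (Fin n → ℂ)} (ζ : Fin n → ℂ) (Nj : ℕ → Fin n → ℕ)
    (K L : Set (Fin n → ℂ)) (P : MvPolynomial (Fin n) ℂ) (ε : ℝ) (l : ℕ) : Set (Ospace n Ω) :=
  {f | (∀ z ∈ K, ‖pSum Nj f.1 ζ l z - mvEval P z‖ < ε) ∧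
    ∀ z ∈ L, ‖pSum Nj f.1 ζ l z - f.1 z‖ < ε}

lemma Eset_open {n : ℕ} {Ω : Set (Fin n → ℂ)} (hΩ : IsOpen Ω) (ζ : Fin n → ℂ) (hζ : ζ ∈ Ω)
    (Nj : ℕ → Fin n → ℕ) {K L : Set (Fin n → ℂ)} (hK : IsCompact K) (hL : IsCompact L)
    (hLΩ : L ⊆ Ω) (P : MvPolynomial (Fin n) ℂ) (ε : ℝ) (l : ℕ) :
    IsOpen (Eset (Ω := Ω) ζ Nj K L P ε l) := by
  have hps := pSum_continuous hΩ ζ hζ Nj l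
  have hA : IsOpen {f : Ospace n Ω | ∀ z ∈ K, ‖pSum Nj f.1 ζ l z - mvEval P z‖ < ε} := by
    refine isOpen_iff_eventually.2 ?_
    intro f hf
    refine hK.eventually_forall_of_forall_eventually fun z hz => ?_
    have hc : Continuous (fun p : Ospace n Ω × (Fin n → ℂ) =>
        ‖pSum Nj p.1.1 ζ l p.2 - mvEval P p.2‖) :=
      (hps.sub ((mvEval_differentiable P).continuous.comp continuous_snd)).norm
    exact (isOpen_lt hc continuous_const).mem_nhds (hf z hz)
  have hB : IsOpen {f : Ospace n Ω | ∀ z ∈ L, ‖pSum Nj f.1 ζ l z - f.1 z‖ < ε} := by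
    refine isOpen_iff_eventually.2 ?_
    intro f hf
    have hL' : IsCompact (Subtype.val ⁻¹' L : Set Ω) :=
      Topology.IsInducing.subtypeVal.isCompact_preimage_iff (by simpa using hLΩ) |>.2 hL
    haveI : LocallyCompactSpace Ω := hΩ.locallyCompactSpace
    have hev : Continuous (fun p : Ospace n Ω × Ω => p.1.1 p.2.1) :=
      (ContinuousEval.continuous_eval (F := C(Ω, ℂ)) (X := Ω) (Y := ℂ)).comp
        (resC_inducing.continuous.prodMap continuous_id)
    have hc : Continuous (fun p : Ospace n Ω × Ω =>
        ‖pSum Nj p.1.1 ζ l p.2.1 - p.1.1 p.2.1‖) :=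
      ((hps.comp (continuous_id.prodMap continuous_subtype_val)).sub hev).norm
    have := hL'.eventually_forall_of_forall_eventually (x₀ := f)
      (P := fun (g : Ospace n Ω) (z : Ω) => ‖pSum Nj g.1 ζ l z.1 - g.1 z.1‖ < ε)
      (fun z hz => (isOpen_lt hc continuous_const).mem_nhds (hf z.1 hz))
    filter_upwards [this] with g hg z hz
    exact hg ⟨z, hLΩ hz⟩ hz
  exact hA.inter hB

lemma O_baire {n : ℕ} {Ω : Set (Fin n → ℂ)} (hΩ : IsOpen Ω) : BaireSpace (Ospace n Ω) := by
  haveI : LocallyCompactSpace Ω := hΩ.locallyCompactSpace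
  letI u : UniformSpace (Ospace n Ω) := UniformSpace.comap resC inferInstance
  have hu : IsUniformInducing (resC : Ospace n Ω → C(Ω, ℂ)) := ⟨rfl⟩
  haveI : (uniformity (Ospace n Ω)).IsCountablyGenerated := by
    rw [← hu.comap_uniformity]
    infer_instance
  have hcl : IsClosed (range (resC : Ospace n Ω → C(Ω, ℂ))) := by
    haveI : FirstCountableTopology C(Ω, ℂ) := UniformSpace.firstCountableTopology _
    refine IsSeqClosed.isClosed ?_
    intro x g hx hg
    choose F hF using hx
    rw [ContinuousMap.tendsto_iff_forall_isCompact_tendstoUniformlyOn] at hg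
    classical
    let f : (Fin n → ℂ) → ℂ := fun z => if hz : z ∈ Ω then g ⟨z, hz⟩ else 0
    have hf : DifferentiableOn ℂ f Ω := by
      refine hol_limit hΩ (fun k => (F k).1) (fun k => (F k).2) f ?_
      intro L hLΩ hL
      have h1 := hg (Subtype.val ⁻¹' L) (Topology.IsInducing.subtypeVal.isCompact_preimage_iff
        (by simpa using hLΩ) |>.2 hL)
      rw [tendstoUniformlyOn_iff] at h1 ⊢
      intro ε hε
      filter_upwards [h1 ε hε] with i hi z hz
      have := hi ⟨z, hLΩ hz⟩ hz
      rw [← hF i, resC_apply] at this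
      simpa [f, hLΩ hz] using this
    refine ⟨⟨f, hf⟩, ?_⟩
    ext z
    change f z.1 = g z
    simp [f]
  haveI : CompleteSpace (Ospace n Ω) := by
    rw [completeSpace_iff_isComplete_range hu]
    exact hcl.isComplete
  haveI : TopologicalSpace.IsCompletelyPseudoMetrizableSpace (Ospace n Ω) :=
    .of_completeSpace_pseudometrizable
  infer_instance

end OTop

section Main
open Metric

/-- Polynomials as elements of `O(Ω)`. -/
def polyO {n : ℕ} (Ω : Set (Fin n → ℂ)) (Q : MvPolynomial (Fin n) ℂ) : Ospace n Ω :=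
  ⟨mvEval Q, (mvEval_differentiable Q).differentiableOn⟩

lemma polyO_val {n : ℕ} (Ω : Set (Fin n → ℂ)) (Q : MvPolynomial (Fin n) ℂ) :
    (polyO Ω Q).1 = mvEval Q := rfl

lemma exists_exhaustion {n : ℕ} {Ω : Set (Fin n → ℂ)} (hΩ : IsOpen Ω) :
    ∃ L : ℕ → Set (Fin n → ℂ), Monotone L ∧ (∀ m, IsCompact (L m)) ∧ (∀ m, L m ⊆ Ω) ∧
      ∀ C ⊆ Ω, IsCompact C → ∃ m, C ⊆ L m := by
  have : LocallyCompactSpace Ω := hΩ.locallyCompactSpace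
  let E := CompactExhaustion.choice Ω
  refine ⟨fun m => Subtype.val '' E m, fun a b hab => image_mono (E.subset hab),
    fun m => (E.isCompact m).image continuous_subtype_val, fun m => by simp, ?_⟩
  intro C hCΩ hC
  have hC' : IsCompact (Subtype.val ⁻¹' C : Set Ω) :=
    Topology.IsInducing.subtypeVal.isCompact_preimage_iff (by simpa using hCΩ) |>.2 hC
  obtain ⟨m, hm⟩ := E.exists_superset_of_isCompact hC'
  exact ⟨m, fun z hz => ⟨⟨z, hCΩ hz⟩, hm hz, rfl⟩⟩

lemma exists_dense_poly {n : ℕ} {K : Set (Fin n → ℂ)} (hK : IsCompact K) :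
    ∃ p : ℕ → MvPolynomial (Fin n) ℂ, ∀ P : MvPolynomial (Fin n) ℂ, ∀ ε > 0,
      ∃ k, ∀ z ∈ K, ‖mvEval (p k) z - mvEval P z‖ < ε := by
  have : CompactSpace K := isCompact_iff_compactSpace.1 hK
  let S : Set C(K, ℂ) := range (toC K)
  have hne : Nonempty S := ⟨⟨toC K 0, 0, rfl⟩⟩
  have hd := TopologicalSpace.denseRange_denseSeq S
  have hp : ∀ k, ∃ q, toC K q = (TopologicalSpace.denseSeq S k).1 :=
    fun k => (TopologicalSpace.denseSeq S k).2
  choose p hp using hp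
  refine ⟨p, fun P ε hε => ?_⟩
  obtain ⟨k, hk⟩ := hd.exists_dist_lt (⟨toC K P, P, rfl⟩ : S) hε
  refine ⟨k, fun z hz => ?_⟩
  have h1 : dist (toC K P) (TopologicalSpace.denseSeq S k).1 < ε := hk
  rw [← hp k] at h1
  have h2 := (ContinuousMap.dist_lt_iff hε).1 h1 ⟨z, hz⟩
  rw [toC_apply, toC_apply, dist_comm, dist_eq_norm] at h2
  exact h2

lemma Eset_dense {n : ℕ} {𝕄 : Set ℕ} (h𝕄 : 𝕄.Infinite)
    {Ω : Set (Fin n → ℂ)} (hΩo : IsOpen Ω) (hΩcv : Convex ℝ Ω)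
    {ζ : Fin n → ℂ} (hζ : ζ ∈ Ω)
    {K : Set (Fin n → ℂ)} (hKcpt : IsCompact K) (hKcv : Convex ℝ K) (hKΩ : K ∩ Ω = ∅)
    (Nj : ℕ → Fin n → ℕ) (hNj : Function.Bijective Nj) (L : Set (Fin n → ℂ))
    (P : MvPolynomial (Fin n) ℂ) {ε : ℝ} (hε : 0 < ε) :
    Dense (⋃ l ∈ 𝕄, Eset (Ω := Ω) ζ Nj K L P ε l) := by
  obtain ⟨E, hEm, hEc, hEΩ, hE⟩ := exists_exhaustion hΩo
  intro f
  have hpos : ∀ j : ℕ, 0 < min ε (1 / ((j : ℝ) + 1)) := fun j => lt_min hε (by positivity)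
  have hQ := fun j : ℕ => runge_two hΩo hΩcv hζ (hEΩ j) (hEc j) hKcpt hKcv hKΩ f.1 f.2 P (hpos j)
  choose Q hQ1 hQ2 using hQ
  refine mem_closure_of_tendsto (f := fun j => polyO Ω (Q j)) (b := atTop) ?_
    (Eventually.of_forall fun j => ?_)
  · rw [tendsto_O]
    intro C hCΩ hC
    obtain ⟨m, hm⟩ := hE C hCΩ hC
    rw [tendstoUniformlyOn_iff]
    intro δ hδ
    obtain ⟨k, hk⟩ := exists_nat_one_div_lt hδ
    filter_upwards [eventually_ge_atTop m, eventually_ge_atTop k] with j hj1 hj2 z hz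
    have h1 := hQ1 j z (hEm hj1 (hm hz))
    rw [dist_comm, dist_eq_norm, polyO_val]
    calc _ < _ := h1
      _ ≤ 1 / ((j : ℝ) + 1) := min_le_right _ _
      _ ≤ 1 / ((k : ℝ) + 1) := by gcongr
      _ < δ := hk
  · obtain ⟨l₀, hl₀⟩ := pSum_poly ζ Nj hNj (Q j)
    obtain ⟨l, hl, hlt⟩ := h𝕄.exists_gt l₀
    refine mem_iUnion₂.2 ⟨l, hl, ?_, ?_⟩
    · intro z hz
      rw [polyO_val, hl₀ l hlt.le]
      exact (hQ2 j z hz).trans_le (min_le_left _ _)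
    · intro z hz
      rw [polyO_val, hl₀ l hlt.le]
      simpa using hε

end Main

/-- Proposition 2.3: universal Taylor series in `O(Ω)` with respect to a
fixed compact convex set `K` disjoint from `Ω`; the set of universal functions is a
nonempty dense `G_δ` subset of `O(Ω)`. -/
theorem prop2_3 (n : ℕ) (𝕄 : Set ℕ) (h𝕄 : 𝕄.Infinite)
    (Ω : Set (Fin n → ℂ)) (hΩo : IsOpen Ω) (hΩcv : Convex ℝ Ω)
    (ζ : Fin n → ℂ) (hζ : ζ ∈ Ω)
    (K : Set (Fin n → ℂ)) (hKcpt : IsCompact K) (hKcv : Convex ℝ K) (hKΩ : K ∩ Ω = ∅)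
    (Nj : ℕ → Fin n → ℕ) (hNj : Function.Bijective Nj) :
    ∃ U : Set (Ospace n Ω),
      U = {f : Ospace n Ω |
        ∀ P : MvPolynomial (Fin n) ℂ, ∃ lam : ℕ → ℕ, (∀ N, lam N ∈ 𝕄) ∧
          TendstoUniformlyOn (fun N => pSum Nj f.1 ζ (lam N)) (mvEval P) atTop K ∧
          ∀ L : Set (Fin n → ℂ), L ⊆ Ω → IsCompact L →
            TendstoUniformlyOn (fun N => pSum Nj f.1 ζ (lam N)) f.1 atTop L} ∧
      U.Nonempty ∧ Dense U ∧ IsGδ U := by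
  obtain ⟨E, hEm, hEc, hEΩ, hE⟩ := exists_exhaustion hΩo
  obtain ⟨p, hp⟩ := exists_dense_poly hKcpt
  have hbaire : BaireSpace (Ospace n Ω) := O_baire hΩo
  let W : ℕ → ℕ → Set (Ospace n Ω) := fun k m =>
    ⋃ l ∈ 𝕄, Eset (Ω := Ω) ζ Nj K (E m) (p k) (1 / ((m : ℝ) + 1)) l
  have hWo : ∀ k m, IsOpen (W k m) := fun k m =>
    isOpen_biUnion fun l _ => Eset_open hΩo ζ hζ Nj hKcpt (hEc m) (hEΩ m) (p k) _ l
  have hWd : ∀ k m, Dense (W k m) := fun k m =>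
    Eset_dense h𝕄 hΩo hΩcv hζ hKcpt hKcv hKΩ Nj hNj (E m) (p k) (by positivity)
  have hUW : {f : Ospace n Ω |
        ∀ P : MvPolynomial (Fin n) ℂ, ∃ lam : ℕ → ℕ, (∀ N, lam N ∈ 𝕄) ∧
          TendstoUniformlyOn (fun N => pSum Nj f.1 ζ (lam N)) (mvEval P) atTop K ∧
          ∀ L : Set (Fin n → ℂ), L ⊆ Ω → IsCompact L →
            TendstoUniformlyOn (fun N => pSum Nj f.1 ζ (lam N)) f.1 atTop L}
      = ⋂ q : ℕ × ℕ, W q.1 q.2 := by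
    ext f
    constructor
    · intro hf
      refine mem_iInter.2 ?_
      rintro ⟨k, m⟩
      obtain ⟨lam, hlam, h1, h2⟩ := hf (p k)
      have h3 := h2 (E m) (hEΩ m) (hEc m)
      rw [Metric.tendstoUniformlyOn_iff] at h1 h3
      have hpos : (0 : ℝ) < 1 / ((m : ℝ) + 1) := by positivity
      obtain ⟨N, h4, h5⟩ := ((h1 _ hpos).and (h3 _ hpos)).exists
      refine mem_iUnion₂.2 ⟨lam N, hlam N, ?_, ?_⟩
      · intro z hz
        rw [← dist_eq_norm, dist_comm]
        exact h4 z hz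
      · intro z hz
        rw [← dist_eq_norm, dist_comm]
        exact h5 z hz
    · intro hf P
      have hf1 := mem_iInter.1 hf
      have hk : ∀ N : ℕ, ∃ k, ∀ z ∈ K, ‖mvEval (p k) z - mvEval P z‖ < 1 / ((N : ℝ) + 1) :=
        fun N => hp P _ (by positivity)
      choose k hk using hk
      have hl : ∀ N : ℕ, ∃ l ∈ 𝕄,
          f ∈ Eset (Ω := Ω) ζ Nj K (E N) (p (k N)) (1 / ((N : ℝ) + 1)) l := by
        intro N
        obtain ⟨l, hl, h⟩ := mem_iUnion₂.1 (hf1 (k N, N))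
        exact ⟨l, hl, h⟩
      choose lam hlam hmem using hl
      refine ⟨lam, hlam, ?_, ?_⟩
      · rw [Metric.tendstoUniformlyOn_iff]
        intro δ hδ
        obtain ⟨j, hj⟩ := exists_nat_one_div_lt (half_pos hδ)
        filter_upwards [eventually_ge_atTop j] with N hN z hz
        have h1 := (hmem N).1 z hz
        have h2 := hk N z hz
        have h3 : 1 / ((N : ℝ) + 1) ≤ 1 / ((j : ℝ) + 1) := by gcongr
        rw [← dist_eq_norm] at h1 h2
        have h4 := dist_triangle (pSum Nj f.1 ζ (lam N) z) (mvEval (p (k N)) z) (mvEval P z)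
        rw [dist_comm]
        linarith
      · intro L hLΩ hL
        obtain ⟨m, hm⟩ := hE L hLΩ hL
        rw [Metric.tendstoUniformlyOn_iff]
        intro δ hδ
        obtain ⟨j, hj⟩ := exists_nat_one_div_lt hδ
        filter_upwards [eventually_ge_atTop j, eventually_ge_atTop m] with N hN hN2 z hz
        have h1 := (hmem N).2 z (hEm hN2 (hm hz))
        have h3 : 1 / ((N : ℝ) + 1) ≤ 1 / ((j : ℝ) + 1) := by gcongr
        rw [← dist_eq_norm] at h1
        rw [dist_comm]
        linarith
  refine ⟨_, rfl, ?_⟩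
  rw [hUW]
  have hdense : Dense (⋂ q : ℕ × ℕ, W q.1 q.2) :=
    dense_iInter_of_isOpen (fun q => hWo q.1 q.2) (fun q => hWd q.1 q.2)
  have hne : Nonempty (Ospace n Ω) := ⟨polyO Ω 0⟩
  exact ⟨hdense.nonempty, hdense, IsGδ.iInter fun q => (hWo q.1 q.2).isGδ⟩

end
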